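/- (Reweighting identity for the missingness-adjusted weights.) Fix a path d = (d1,d2) in {0,1}^2 with P(D = d) > 0. Suppose Assumption MAR holds, let φ_{d2} be a measurable (0,1]-valued function of X, and suppose (S/φ_{d2}(X)) · 1{D = d} · ΔY and (S/φ_{d2}(X)) · 1{D = d} are integrable. Then E[(S/φ_{d2}(X)) · 1{D = d} · ΔY] = E[(q_{d2}(X)/φ_{d2}(X)) · p_d(X) · m_d(X)] and E[(S/φ_{d2}(X)) · 1{D = d}] = E[(q_{d2}(X)/φ_{d2}(X)) · p_d(X)], with the convention p_d(X) · m_d(X) := 0 on {p_d(X) = 0}. -/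

import Mathlib

open MeasureTheory Set
open scoped Classical

noncomputable section

namespace DIDMissing

variable {Ω : Type*} {𝓧 : Type*}

/-- Real-valued indicator of a set. -/
def ind (A : Set Ω) : Ω → ℝ := A.indicator fun _ => (1 : ℝ)

/-- All treatment paths `{0,1}²` (coded as reals). -/
def allPaths : Set (ℝ × ℝ) := {(0, 0), (0, 1), (1, 0), (1, 1)}

/-- The three treated paths `{(1,1), (0,1), (1,0)}`. -/
def threePaths : Set (ℝ × ℝ) := {(1, 1), (0, 1), (1, 0)}

/-- The event `{D = d}` for a treatment path `d = (d₁, d₂)`. -/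
def evD (D1 D2 : Ω → ℝ) (d : ℝ × ℝ) : Set Ω := {ω | D1 ω = d.1 ∧ D2 ω = d.2}

/-- The event `{D₂ = b}`. -/
def evD2 (D2 : Ω → ℝ) (b : ℝ) : Set Ω := {ω | D2 ω = b}

/-- `g` is a (measurable-in-the-covariate) version of the conditional mean `E[Z ∣ A, X]`:
for every bounded measurable `h`, `E[1_A · Z · h(X)] = E[1_A · g(X) · h(X)]`. -/
def IsCondMeanGiven [MeasurableSpace Ω] [MeasurableSpace 𝓧] (P : Measure Ω) (X : Ω → 𝓧)
    (A : Set Ω) (Z : Ω → ℝ) (g : 𝓧 → ℝ) : Prop :=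
  Measurable g ∧
    ∀ h : 𝓧 → ℝ, Measurable h → (∃ C, ∀ x, |h x| ≤ C) →
      ∫ ω, ind A ω * Z ω * h (X ω) ∂P = ∫ ω, ind A ω * g (X ω) * h (X ω) ∂P

/-- Assumption DID for a path `d` relative to `d' = (0,0)`:
(i) no anticipation, `E[Y₀(d) ∣ D = d, X] = E[Y₀(0,0) ∣ D = d, X]` a.s., stated in the
version-free integral form; and (ii) conditional parallel trends, stated as the existence
of a common version of `E[Y₂(0,0) − Y₀(0,0) ∣ X]` and `E[Y₂(0,0) − Y₀(0,0) ∣ D = d, X]`. -/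
def DID [MeasurableSpace Ω] [MeasurableSpace 𝓧] (P : Measure Ω) (X : Ω → 𝓧)
    (D1 D2 : Ω → ℝ) (Y0p Y2p : ℝ × ℝ → Ω → ℝ) (d : ℝ × ℝ) : Prop :=
  (∀ h : 𝓧 → ℝ, Measurable h → (∃ C, ∀ x, |h x| ≤ C) →
      ∫ ω, ind (evD D1 D2 d) ω * Y0p d ω * h (X ω) ∂P
        = ∫ ω, ind (evD D1 D2 d) ω * Y0p (0, 0) ω * h (X ω) ∂P) ∧
  (∃ tr : 𝓧 → ℝ,
      IsCondMeanGiven P X Set.univ (fun ω => Y2p (0, 0) ω - Y0p (0, 0) ω) tr ∧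
      IsCondMeanGiven P X (evD D1 D2 d) (fun ω => Y2p (0, 0) ω - Y0p (0, 0) ω) tr)

/-- Assumption MAR: `S ⟂ (D₁, ΔY) ∣ (D₂, X)`, where `q d₂` is a version of the
missing-data probability `P(S = 1 ∣ D₂ = d₂, X)`, which is `(0,1]`-valued a.s. -/
def MAR [MeasurableSpace Ω] [MeasurableSpace 𝓧] (P : Measure Ω) (X : Ω → 𝓧)
    (D1 D2 S Y0 Y2 : Ω → ℝ) (q : ℝ → 𝓧 → ℝ) : Prop :=
  (∀ d2 ∈ ({0, 1} : Set ℝ), IsCondMeanGiven P X (evD2 D2 d2) S (q d2)) ∧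
  (∀ d2 ∈ ({0, 1} : Set ℝ), ∀ᵐ ω ∂P, 0 < q d2 (X ω) ∧ q d2 (X ω) ≤ 1) ∧
  (∀ d2 ∈ ({0, 1} : Set ℝ), ∀ f : ℝ × ℝ → ℝ, Measurable f → (∃ C, ∀ p, |f p| ≤ C) →
      ∀ h : 𝓧 → ℝ, Measurable h → (∃ C, ∀ x, |h x| ≤ C) →
        ∫ ω, ind (evD2 D2 d2) ω * S ω * f (D1 ω, Y2 ω - Y0 ω) * h (X ω) ∂P
          = ∫ ω, ind (evD2 D2 d2) ω * q d2 (X ω) * f (D1 ω, Y2 ω - Y0 ω) * h (X ω) ∂P)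

/-- The path-dependent ATT `τ_{d,(0,0)} = E[Y₂(d) − Y₂(0,0) ∣ D = d]`. -/
def tau [MeasurableSpace Ω] (P : Measure Ω) (D1 D2 : Ω → ℝ)
    (Y2p : ℝ × ℝ → Ω → ℝ) (d : ℝ × ℝ) : ℝ :=
  (P (evD D1 D2 d)).toReal⁻¹ * ∫ ω in evD D1 D2 d, (Y2p d ω - Y2p (0, 0) ω) ∂P

/-!
Write `ΔY = Y₂ − Y₀`. MAR says that, on `{D = d}`, the weights `S` and `q_{d₂}(X)` integrate to the
same value over every rectangle in `(ΔY, X)`. The corresponding weighted laws of `(ΔY, X)` therefore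
coincide, so `S` may be replaced by `q_{d₂}(X)` against every function of `(ΔY, X)`, bounded or not.
What is left is a function of `X` times `1{D = d} · ΔY`; conditioning on `X`, first given `D = d`
and then unconditionally, replaces `ΔY` by `m_d(X)` and `1{D = d}` by `p_d(X)`.
-/

theorem ae_eq_condExp_of_forall_setIntegral_eq_of_stronglyMeasurable {α E : Type*}
    [NormedAddCommGroup E] [NormedSpace ℝ E] [CompleteSpace E]
    {m m₀ : MeasurableSpace α} {μ : Measure α} (hm : m ≤ m₀) [SigmaFinite (μ.trim hm)]
    {f g : α → E} (hf : Integrable f μ) (hg : StronglyMeasurable[m] g)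
    (hfg : ∀ s, MeasurableSet[m] s → μ s < ⊤ → ∫ x in s, g x ∂μ = ∫ x in s, f x ∂μ) :
    g =ᵐ[μ] μ[f | m] := by
  obtain ⟨B, hB, hB_univ⟩ := hg.exists_spanning_measurableSet_norm_le hm μ
  have hg_int (n : ℕ) : IntegrableOn g (B n) μ :=
    Measure.integrableOn_of_bounded (hB n).2.1.ne (hg.mono hm).aestronglyMeasurable
      (ae_restrict_of_forall_mem (hm _ (hB n).1) (hB n).2.2)
  have h_trunc (n : ℕ) : (B n).indicator g =ᵐ[μ] (B n).indicator (μ[f | m]) := by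
    refine Filter.EventuallyEq.trans ?_ (condExp_indicator hf (hB n).1)
    have hBn : MeasurableSet[m₀] (B n) := hm _ (hB n).1
    refine ae_eq_condExp_of_forall_setIntegral_eq hm (hf.indicator hBn)
      (fun s _ _ => ((integrable_indicator_iff hBn).2 (hg_int n)).integrableOn)
      (fun s hs hμs => ?_) (hg.indicator (hB n).1).aestronglyMeasurable
    rw [setIntegral_indicator hBn, setIntegral_indicator hBn]
    exact hfg _ (hs.inter (hB n).1) ((measure_mono inter_subset_left).trans_lt hμs)
  filter_upwards [ae_all_iff.2 h_trunc] with x hx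
  obtain ⟨n, hn⟩ := mem_iUnion.1 (hB_univ.symm ▸ mem_univ x)
  simpa only [indicator_of_mem hn] using hx n

section WeightedLaw

variable {α : Type*} [MeasurableSpace Ω] [MeasurableSpace α] {μ : Measure Ω} {w w₁ w₂ : Ω → ℝ}
  {T : Ω → α}

/-- The law of `T` under the measure with density `w` with respect to `μ`: the measure
`A ↦ E_μ[w · 1{T ∈ A}]`. Equality of two such laws lets one weight replace the other against
unbounded integrands. Negative values of `w` are truncated to `0`. -/
def weightedLaw (μ : Measure Ω) (w : Ω → ℝ) (T : Ω → α) : Measure α :=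
  (μ.withDensity fun ω => ENNReal.ofReal (w ω)).map T

theorem weightedLaw_apply (hT : Measurable T) (hw : Integrable w μ) (hw0 : 0 ≤ᵐ[μ] w) {A : Set α}
    (hA : MeasurableSet A) : weightedLaw μ w T A = ENNReal.ofReal (∫ ω in T ⁻¹' A, w ω ∂μ) := by
  rw [weightedLaw, Measure.map_apply hT hA, withDensity_apply _ (hT hA),
    ofReal_integral_eq_lintegral_ofReal hw.integrableOn (ae_restrict_of_ae hw0)]

theorem isFiniteMeasure_weightedLaw (hT : Measurable T) (hw : Integrable w μ) (hw0 : 0 ≤ᵐ[μ] w) :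
    IsFiniteMeasure (weightedLaw μ w T) :=
  ⟨by rw [weightedLaw_apply hT hw hw0 .univ]; exact ENNReal.ofReal_lt_top⟩

theorem integrable_weightedLaw_iff (hT : Measurable T) (hw : AEMeasurable w μ) (hw0 : 0 ≤ᵐ[μ] w)
    {F : α → ℝ} (hF : Measurable F) :
    Integrable F (weightedLaw μ w T) ↔ Integrable (fun ω => w ω * F (T ω)) μ := by
  rw [weightedLaw, integrable_map_measure hF.aestronglyMeasurable hT.aemeasurable,
    integrable_withDensity_iff_integrable_smul₀' hw.ennreal_ofReal (by simp)]
  refine integrable_congr ?_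
  filter_upwards [hw0] with ω hω
  rw [ENNReal.toReal_ofReal hω, smul_eq_mul, Function.comp_apply]

theorem integral_weightedLaw (hT : Measurable T) (hw : AEMeasurable w μ) (hw0 : 0 ≤ᵐ[μ] w)
    {F : α → ℝ} (hF : Measurable F) :
    ∫ a, F a ∂(weightedLaw μ w T) = ∫ ω, w ω * F (T ω) ∂μ := by
  rw [weightedLaw, integral_map hT.aemeasurable hF.aestronglyMeasurable,
    integral_withDensity_eq_integral_toReal_smul₀ hw.ennreal_ofReal (by simp)]
  refine integral_congr_ae ?_
  filter_upwards [hw0] with ω hω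
  rw [ENNReal.toReal_ofReal hω, smul_eq_mul]

theorem weightedLaw_prodMk_eq {β : Type*} [MeasurableSpace β] {U : Ω → β} (hT : Measurable T)
    (hU : Measurable U) (hw₁ : Integrable w₁ μ) (hw₁0 : 0 ≤ᵐ[μ] w₁) (hw₂ : Integrable w₂ μ)
    (hw₂0 : 0 ≤ᵐ[μ] w₂)
    (h : ∀ s t, MeasurableSet s → MeasurableSet t →
      ∫ ω in T ⁻¹' s ∩ U ⁻¹' t, w₁ ω ∂μ = ∫ ω in T ⁻¹' s ∩ U ⁻¹' t, w₂ ω ∂μ) :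
    weightedLaw μ w₁ (fun ω => (T ω, U ω)) = weightedLaw μ w₂ (fun ω => (T ω, U ω)) := by
  have hTU := hT.prodMk hU
  have := isFiniteMeasure_weightedLaw hTU hw₁ hw₁0
  refine Measure.ext_prod fun {s t} hs ht => ?_
  rw [weightedLaw_apply hTU hw₁ hw₁0 (hs.prod ht), weightedLaw_apply hTU hw₂ hw₂0 (hs.prod ht),
    mk_preimage_prod, h s t hs ht]

end WeightedLaw

theorem abs_ind_le_one (A : Set Ω) (ω : Ω) : |ind A ω| ≤ 1 := by
  by_cases hω : ω ∈ A <;> simp [ind, hω]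

theorem measurable_ind [MeasurableSpace Ω] {A : Set Ω} (hA : MeasurableSet A) :
    Measurable (ind A) :=
  measurable_const.indicator hA

theorem ind_mul_eq_indicator (A : Set Ω) (f : Ω → ℝ) :
    (fun ω => ind A ω * f ω) = A.indicator f := by
  ext ω
  by_cases hω : ω ∈ A <;> simp [ind, hω]

section Covariates

variable [MeasurableSpace Ω] [m𝓧 : MeasurableSpace 𝓧] {P : Measure Ω} {X : Ω → 𝓧}

theorem integral_ind_mul {A : Set Ω} (hA : MeasurableSet A) (f : Ω → ℝ) :
    ∫ ω, ind A ω * f ω ∂P = ∫ ω in A, f ω ∂P := by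
  rw [ind_mul_eq_indicator, integral_indicator hA]

theorem integrable_ind_mul_iff {A : Set Ω} (hA : MeasurableSet A) {f : Ω → ℝ} :
    Integrable (fun ω => ind A ω * f ω) P ↔ IntegrableOn f A P := by
  rw [ind_mul_eq_indicator, integrable_indicator_iff hA]

theorem measurableSet_evD {D1 D2 : Ω → ℝ} (hD1 : Measurable D1) (hD2 : Measurable D2)
    (d : ℝ × ℝ) : MeasurableSet (evD D1 D2 d) :=
  (hD1 (measurableSet_singleton d.1)).inter (hD2 (measurableSet_singleton d.2))

namespace IsCondMeanGiven

variable {A : Set Ω} {Z : Ω → ℝ} {g k : 𝓧 → ℝ}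

theorem setIntegral_preimage_eq (hg : IsCondMeanGiven P X A Z g) (hX : Measurable X)
    (hA : MeasurableSet A) {B : Set 𝓧} (hB : MeasurableSet B) :
    ∫ ω in X ⁻¹' B, g (X ω) ∂(P.restrict A) = ∫ ω in X ⁻¹' B, Z ω ∂(P.restrict A) := by
  have h_test := hg.2 (ind B) (measurable_ind hB) ⟨1, abs_ind_le_one B⟩
  have h_ind (f : Ω → ℝ) :
      ∫ ω, ind A ω * f ω * ind B (X ω) ∂P = ∫ ω in X ⁻¹' B, f ω ∂(P.restrict A) := by
    simp_rw [mul_assoc]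
    rw [integral_ind_mul hA, ← integral_ind_mul (hX hB)]
    simp_rw [mul_comm (f _)]
    rfl
  rw [← h_ind, ← h_ind, h_test]

theorem ae_eq_condExp [IsFiniteMeasure P] (hg : IsCondMeanGiven P X A Z g) (hX : Measurable X)
    (hA : MeasurableSet A) (hZ : IntegrableOn Z A P) :
    g ∘ X =ᵐ[P.restrict A] (P.restrict A)[Z | m𝓧.comap X] := by
  refine ae_eq_condExp_of_forall_setIntegral_eq_of_stronglyMeasurable hX.comap_le hZ
    (hg.1.comp (comap_measurable X)).stronglyMeasurable ?_
  rintro _ ⟨B, hB, rfl⟩ -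
  exact hg.setIntegral_preimage_eq hX hA hB

theorem condExp_mul_comp_ae_eq [IsFiniteMeasure P] (hg : IsCondMeanGiven P X A Z g)
    (hX : Measurable X) (hA : MeasurableSet A) (hZ : IntegrableOn Z A P) (hk : Measurable k)
    (hZk : IntegrableOn (fun ω => Z ω * k (X ω)) A P) :
    (P.restrict A)[fun ω => Z ω * k (X ω) | m𝓧.comap X]
      =ᵐ[P.restrict A] fun ω => g (X ω) * k (X ω) := by
  filter_upwards [hg.ae_eq_condExp hX hA hZ, condExp_mul_of_stronglyMeasurable_right
    (hk.comp (comap_measurable X)).stronglyMeasurable hZk hZ] with ω hgω hpull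
  exact hpull.trans (congrArg (· * k (X ω)) hgω.symm)

theorem integrableOn_mul_comp [IsFiniteMeasure P] (hg : IsCondMeanGiven P X A Z g)
    (hX : Measurable X) (hA : MeasurableSet A) (hZ : IntegrableOn Z A P) (hk : Measurable k)
    (hZk : IntegrableOn (fun ω => Z ω * k (X ω)) A P) :
    IntegrableOn (fun ω => g (X ω) * k (X ω)) A P :=
  integrable_condExp.congr (hg.condExp_mul_comp_ae_eq hX hA hZ hk hZk)

theorem setIntegral_mul_comp [IsFiniteMeasure P] (hg : IsCondMeanGiven P X A Z g)
    (hX : Measurable X) (hA : MeasurableSet A) (hZ : IntegrableOn Z A P) (hk : Measurable k)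
    (hZk : IntegrableOn (fun ω => Z ω * k (X ω)) A P) :
    ∫ ω in A, Z ω * k (X ω) ∂P = ∫ ω in A, g (X ω) * k (X ω) ∂P := by
  rw [← integral_condExp hX.comap_le]
  exact integral_congr_ae (hg.condExp_mul_comp_ae_eq hX hA hZ hk hZk)

theorem setIntegral_comp_eq_integral_mul [IsFiniteMeasure P] {p : 𝓧 → ℝ}
    (hp : IsCondMeanGiven P X univ (ind A) p) (hX : Measurable X) (hA : MeasurableSet A)
    (hk : Measurable k) (hkA : IntegrableOn (fun ω => k (X ω)) A P) :
    ∫ ω in A, k (X ω) ∂P = ∫ ω, p (X ω) * k (X ω) ∂P := by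
  have h_ind : IntegrableOn (ind A) univ P :=
    ((integrable_const (1 : ℝ)).indicator hA).integrableOn
  have h := hp.setIntegral_mul_comp hX .univ h_ind hk
    ((integrable_ind_mul_iff hA).2 hkA).integrableOn
  rwa [setIntegral_univ, setIntegral_univ, integral_ind_mul hA] at h

end IsCondMeanGiven

namespace MAR

variable {D1 D2 S Y0 Y2 : Ω → ℝ} {q : ℝ → 𝓧 → ℝ} {d : ℝ × ℝ}

theorem setIntegral_inter_preimage_eq (hMAR : MAR P X D1 D2 S Y0 Y2 q)
    (hd : d.2 ∈ ({0, 1} : Set ℝ)) (hX : Measurable X) (hD1 : Measurable D1) (hD2 : Measurable D2)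
    (hΔ : Measurable fun ω => Y2 ω - Y0 ω) {s : Set ℝ} {t : Set 𝓧} (hs : MeasurableSet s)
    (ht : MeasurableSet t) :
    ∫ ω in (fun ω => Y2 ω - Y0 ω) ⁻¹' s ∩ X ⁻¹' t, S ω ∂(P.restrict (evD D1 D2 d))
      = ∫ ω in (fun ω => Y2 ω - Y0 ω) ⁻¹' s ∩ X ⁻¹' t, q d.2 (X ω)
          ∂(P.restrict (evD D1 D2 d)) := by
  have h_test := hMAR.2.2 d.2 hd (ind ({d.1} ×ˢ s))
    (measurable_ind ((measurableSet_singleton _).prod hs)) ⟨1, abs_ind_le_one _⟩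
    (ind t) (measurable_ind ht) ⟨1, abs_ind_le_one t⟩
  have h_ind (w : Ω → ℝ) :
      ∫ ω, ind (evD2 D2 d.2) ω * w ω * ind ({d.1} ×ˢ s) (D1 ω, Y2 ω - Y0 ω) * ind t (X ω) ∂P
        = ∫ ω in (fun ω => Y2 ω - Y0 ω) ⁻¹' s ∩ X ⁻¹' t, w ω ∂(P.restrict (evD D1 D2 d)) := by
    have hst := (hΔ hs).inter (hX ht)
    rw [Measure.restrict_restrict hst,
      ← integral_indicator (hst.inter (measurableSet_evD hD1 hD2 d))]
    congr 1 with ω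
    by_cases h1 : D1 ω = d.1 <;> by_cases h2 : D2 ω = d.2 <;> by_cases h3 : Y2 ω - Y0 ω ∈ s <;>
      by_cases h4 : X ω ∈ t <;> simp [indicator, ind, evD, evD2, h1, h2, h3, h4]
  rw [← h_ind, ← h_ind, h_test]

theorem integrable_comp [IsFiniteMeasure P] (hMAR : MAR P X D1 D2 S Y0 Y2 q) {d2 : ℝ}
    (hd2 : d2 ∈ ({0, 1} : Set ℝ)) (hX : Measurable X) : Integrable (fun ω => q d2 (X ω)) P :=
  .of_bound ((hMAR.1 d2 hd2).1.comp hX).aestronglyMeasurable 1 <| by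
    filter_upwards [hMAR.2.1 d2 hd2] with ω hω
    rw [Real.norm_of_nonneg hω.1.le]
    exact hω.2

theorem comp_nonneg (hMAR : MAR P X D1 D2 S Y0 Y2 q) {d2 : ℝ}
    (hd2 : d2 ∈ ({0, 1} : Set ℝ)) : 0 ≤ᵐ[P] fun ω => q d2 (X ω) :=
  (hMAR.2.1 d2 hd2).mono fun _ hω => hω.1.le

theorem weightedLaw_eq [IsFiniteMeasure P] (hMAR : MAR P X D1 D2 S Y0 Y2 q)
    (hd : d.2 ∈ ({0, 1} : Set ℝ)) (hX : Measurable X) (hD1 : Measurable D1) (hD2 : Measurable D2)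
    (hΔ : Measurable fun ω => Y2 ω - Y0 ω) (hS : Integrable S P) (hS0 : 0 ≤ᵐ[P] S) :
    weightedLaw (P.restrict (evD D1 D2 d)) S (fun ω => (Y2 ω - Y0 ω, X ω))
      = weightedLaw (P.restrict (evD D1 D2 d)) (fun ω => q d.2 (X ω))
          (fun ω => (Y2 ω - Y0 ω, X ω)) :=
  weightedLaw_prodMk_eq hΔ hX hS.restrict (ae_restrict_of_ae hS0)
    (hMAR.integrable_comp hd hX).restrict (ae_restrict_of_ae (hMAR.comp_nonneg hd))
    fun _ _ hs ht => hMAR.setIntegral_inter_preimage_eq hd hX hD1 hD2 hΔ hs ht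

theorem integrableOn_mul_iff [IsFiniteMeasure P] (hMAR : MAR P X D1 D2 S Y0 Y2 q)
    (hd : d.2 ∈ ({0, 1} : Set ℝ)) (hX : Measurable X) (hD1 : Measurable D1) (hD2 : Measurable D2)
    (hΔ : Measurable fun ω => Y2 ω - Y0 ω) (hS : Integrable S P) (hS0 : 0 ≤ᵐ[P] S)
    {F : ℝ × 𝓧 → ℝ} (hF : Measurable F) :
    IntegrableOn (fun ω => S ω * F (Y2 ω - Y0 ω, X ω)) (evD D1 D2 d) P
      ↔ IntegrableOn (fun ω => q d.2 (X ω) * F (Y2 ω - Y0 ω, X ω)) (evD D1 D2 d) P := by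
  rw [IntegrableOn, IntegrableOn,
    ← integrable_weightedLaw_iff (hΔ.prodMk hX) hS.restrict.aemeasurable (ae_restrict_of_ae hS0) hF,
    hMAR.weightedLaw_eq hd hX hD1 hD2 hΔ hS hS0,
    integrable_weightedLaw_iff (hΔ.prodMk hX) (hMAR.integrable_comp hd hX).restrict.aemeasurable
      (ae_restrict_of_ae (hMAR.comp_nonneg hd)) hF]

theorem setIntegral_mul_eq [IsFiniteMeasure P] (hMAR : MAR P X D1 D2 S Y0 Y2 q)
    (hd : d.2 ∈ ({0, 1} : Set ℝ)) (hX : Measurable X) (hD1 : Measurable D1) (hD2 : Measurable D2)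
    (hΔ : Measurable fun ω => Y2 ω - Y0 ω) (hS : Integrable S P) (hS0 : 0 ≤ᵐ[P] S)
    {F : ℝ × 𝓧 → ℝ} (hF : Measurable F) :
    ∫ ω in evD D1 D2 d, S ω * F (Y2 ω - Y0 ω, X ω) ∂P
      = ∫ ω in evD D1 D2 d, q d.2 (X ω) * F (Y2 ω - Y0 ω, X ω) ∂P := by
  rw [← integral_weightedLaw (hΔ.prodMk hX) hS.restrict.aemeasurable (ae_restrict_of_ae hS0) hF,
    hMAR.weightedLaw_eq hd hX hD1 hD2 hΔ hS hS0,
    integral_weightedLaw (hΔ.prodMk hX) (hMAR.integrable_comp hd hX).restrict.aemeasurable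
      (ae_restrict_of_ae (hMAR.comp_nonneg hd)) hF]

theorem integral_mul_ind_mul_eq [IsFiniteMeasure P] (hMAR : MAR P X D1 D2 S Y0 Y2 q)
    (hd : d.2 ∈ ({0, 1} : Set ℝ)) (hX : Measurable X) (hD1 : Measurable D1) (hD2 : Measurable D2)
    (hΔ : Measurable fun ω => Y2 ω - Y0 ω) (hS : Integrable S P) (hS0 : 0 ≤ᵐ[P] S)
    {k : 𝓧 → ℝ} (hk : Measurable k) {u : ℝ → ℝ} (hu : Measurable u)
    (hui : IntegrableOn (fun ω => u (Y2 ω - Y0 ω)) (evD D1 D2 d) P)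
    {pd : 𝓧 → ℝ} (hpd : IsCondMeanGiven P X univ (ind (evD D1 D2 d)) pd)
    {md : 𝓧 → ℝ} (hmd : IsCondMeanGiven P X (evD D1 D2 d) (fun ω => u (Y2 ω - Y0 ω)) md)
    (hfin : Integrable (fun ω => S ω * k (X ω) * ind (evD D1 D2 d) ω * u (Y2 ω - Y0 ω)) P) :
    ∫ ω, S ω * k (X ω) * ind (evD D1 D2 d) ω * u (Y2 ω - Y0 ω) ∂P
      = ∫ ω, q d.2 (X ω) * k (X ω) * (pd (X ω) * md (X ω)) ∂P := by
  have hA := measurableSet_evD hD1 hD2 d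
  have hqk : Measurable fun x => q d.2 x * k x := (hMAR.1 d.2 hd).1.mul hk
  have hF : Measurable fun z : ℝ × 𝓧 => u z.1 * k z.2 :=
    (hu.comp measurable_fst).mul (hk.comp measurable_snd)
  have h_ind : (fun ω => S ω * k (X ω) * ind (evD D1 D2 d) ω * u (Y2 ω - Y0 ω))
      = fun ω => ind (evD D1 D2 d) ω * (S ω * (u (Y2 ω - Y0 ω) * k (X ω))) := by
    ext ω; ring
  rw [h_ind] at hfin ⊢
  have h_int_q : IntegrableOn (fun ω => u (Y2 ω - Y0 ω) * (q d.2 (X ω) * k (X ω)))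
      (evD D1 D2 d) P := by
    simpa only [mul_left_comm] using
      (hMAR.integrableOn_mul_iff hd hX hD1 hD2 hΔ hS hS0 hF).1 ((integrable_ind_mul_iff hA).1 hfin)
  calc ∫ ω, ind (evD D1 D2 d) ω * (S ω * (u (Y2 ω - Y0 ω) * k (X ω))) ∂P
    _ = ∫ ω in evD D1 D2 d, S ω * (u (Y2 ω - Y0 ω) * k (X ω)) ∂P := integral_ind_mul hA _
    _ = ∫ ω in evD D1 D2 d, q d.2 (X ω) * (u (Y2 ω - Y0 ω) * k (X ω)) ∂P :=
      hMAR.setIntegral_mul_eq hd hX hD1 hD2 hΔ hS hS0 hF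
    _ = ∫ ω in evD D1 D2 d, u (Y2 ω - Y0 ω) * (q d.2 (X ω) * k (X ω)) ∂P := by
      simp only [mul_left_comm]
    _ = ∫ ω in evD D1 D2 d, md (X ω) * (q d.2 (X ω) * k (X ω)) ∂P :=
      hmd.setIntegral_mul_comp hX hA hui hqk h_int_q
    _ = ∫ ω, pd (X ω) * (md (X ω) * (q d.2 (X ω) * k (X ω))) ∂P :=
      hpd.setIntegral_comp_eq_integral_mul hX hA (hmd.1.mul hqk)
        (hmd.integrableOn_mul_comp hX hA hui hqk h_int_q)
    _ = ∫ ω, q d.2 (X ω) * k (X ω) * (pd (X ω) * md (X ω)) ∂P := by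
      congr 1 with ω; ring

end MAR

end Covariates

theorem statement_17_general [MeasurableSpace Ω] [MeasurableSpace 𝓧] (P : Measure Ω)
    [IsFiniteMeasure P] (X : Ω → 𝓧) (hX : Measurable X) (Y0 Y2 D1 D2 S : Ω → ℝ)
    (hΔ : Measurable fun ω => Y2 ω - Y0 ω) (hD1 : Measurable D1) (hD2 : Measurable D2)
    (hS : Integrable S P) (hS0 : 0 ≤ᵐ[P] S) (d : ℝ × ℝ) (hd : d.2 ∈ ({0, 1} : Set ℝ))
    (hΔi : IntegrableOn (fun ω => Y2 ω - Y0 ω) (evD D1 D2 d) P)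
    (q : ℝ → 𝓧 → ℝ) (hMAR : MAR P X D1 D2 S Y0 Y2 q) (k : 𝓧 → ℝ) (hk : Measurable k)
    (pd : 𝓧 → ℝ) (hpd : IsCondMeanGiven P X univ (ind (evD D1 D2 d)) pd)
    (md : 𝓧 → ℝ) (hmd : IsCondMeanGiven P X (evD D1 D2 d) (fun ω => Y2 ω - Y0 ω) md)
    (hfin1 : Integrable
      (fun ω => S ω * k (X ω) * ind (evD D1 D2 d) ω * (Y2 ω - Y0 ω)) P)
    (hfin2 : Integrable (fun ω => S ω * k (X ω) * ind (evD D1 D2 d) ω) P) :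
    (∫ ω, S ω * k (X ω) * ind (evD D1 D2 d) ω * (Y2 ω - Y0 ω) ∂P
      = ∫ ω, q d.2 (X ω) * k (X ω) * (pd (X ω) * md (X ω)) ∂P) ∧
    (∫ ω, S ω * k (X ω) * ind (evD D1 D2 d) ω ∂P
      = ∫ ω, q d.2 (X ω) * k (X ω) * pd (X ω) ∂P) := by
  constructor
  · exact hMAR.integral_mul_ind_mul_eq hd hX hD1 hD2 hΔ hS hS0 hk measurable_id hΔi hpd hmd hfin1
  · have h_one : IsCondMeanGiven P X (evD D1 D2 d) (fun _ => 1) fun _ => 1 :=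
      ⟨measurable_const, fun _ _ _ => rfl⟩
    simpa only [mul_one] using
      hMAR.integral_mul_ind_mul_eq (u := fun _ => 1) hd hX hD1 hD2 hΔ hS hS0 hk measurable_const
        (integrable_const 1).integrableOn hpd h_one (by simpa only [mul_one] using hfin2)

theorem integrable_of_eq_zero_or_one [MeasurableSpace Ω] {P : Measure Ω} [IsFiniteMeasure P]
    {S : Ω → ℝ} (hS : Measurable S) (hSv : ∀ ω, S ω = 0 ∨ S ω = 1) : Integrable S P :=
  .of_bound hS.aestronglyMeasurable 1 <| .of_forall fun ω => by
    rcases hSv ω with h | h <;> simp [h]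

theorem ae_nonneg_of_eq_zero_or_one [MeasurableSpace Ω] {P : Measure Ω} {S : Ω → ℝ}
    (hSv : ∀ ω, S ω = 0 ∨ S ω = 1) : 0 ≤ᵐ[P] S :=
  .of_forall fun ω => by rcases hSv ω with h | h <;> simp [h]

theorem snd_mem_of_mem_allPaths {d : ℝ × ℝ} (hd : d ∈ allPaths) : d.2 ∈ ({0, 1} : Set ℝ) := by
  rcases hd with rfl | rfl | rfl | rfl <;> simp

theorem ite_eq_zero_mul (a b : ℝ) : (if a = 0 then 0 else a * b) = a * b := by
  split_ifs with ha <;> simp [ha]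

/-- Reweighting identities for the missingness-adjusted weights (with the convention
`p_d(X) · m_d(X) := 0` on `{p_d(X) = 0}`). -/
theorem statement_17
    [MeasurableSpace Ω] [m𝓧 : MeasurableSpace 𝓧]
    (P : Measure Ω) [IsProbabilityMeasure P]
    (X : Ω → 𝓧) (hX : Measurable X)
    (Y0 Y2 D1 D2 S : Ω → ℝ)
    (hY0 : Measurable Y0) (hY2 : Measurable Y2)
    (hD1 : Measurable D1) (hD2 : Measurable D2) (hS : Measurable S)
    (hY0i : Integrable Y0 P) (hY2i : Integrable Y2 P)
    (hD1v : ∀ ω, D1 ω = 0 ∨ D1 ω = 1) (hD2v : ∀ ω, D2 ω = 0 ∨ D2 ω = 1)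
    (hSv : ∀ ω, S ω = 0 ∨ S ω = 1)
    (d : ℝ × ℝ) (hd : d ∈ allPaths) (hPd : 0 < P (evD D1 D2 d))
    (q : ℝ → 𝓧 → ℝ) (hMAR : MAR P X D1 D2 S Y0 Y2 q)
    (φ : 𝓧 → ℝ) (hφm : Measurable φ) (hφv : ∀ x, 0 < φ x ∧ φ x ≤ 1)
    (pd : 𝓧 → ℝ) (hpd : IsCondMeanGiven P X Set.univ (ind (evD D1 D2 d)) pd)
    (md : 𝓧 → ℝ) (hmd : IsCondMeanGiven P X (evD D1 D2 d) (fun ω => Y2 ω - Y0 ω) md)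
    (hfin1 : Integrable
        (fun ω => S ω / φ (X ω) * ind (evD D1 D2 d) ω * (Y2 ω - Y0 ω)) P)
    (hfin2 : Integrable (fun ω => S ω / φ (X ω) * ind (evD D1 D2 d) ω) P) :
    (∫ ω, S ω / φ (X ω) * ind (evD D1 D2 d) ω * (Y2 ω - Y0 ω) ∂P
        = ∫ ω, q d.2 (X ω) / φ (X ω)
            * (if pd (X ω) = 0 then 0 else pd (X ω) * md (X ω)) ∂P) ∧
    (∫ ω, S ω / φ (X ω) * ind (evD D1 D2 d) ω ∂P
        = ∫ ω, q d.2 (X ω) / φ (X ω) * pd (X ω) ∂P) := by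
  simp only [ite_eq_zero_mul, div_eq_mul_inv] at hfin1 hfin2 ⊢
  exact statement_17_general P X hX Y0 Y2 D1 D2 S (hY2.sub hY0) hD1 hD2
    (integrable_of_eq_zero_or_one hS hSv) (ae_nonneg_of_eq_zero_or_one hSv) d
    (snd_mem_of_mem_allPaths hd) (hY2i.sub hY0i).integrableOn q hMAR (fun x => (φ x)⁻¹) hφm.inv
    pd hpd md hmd hfin1 hfin2

end DIDMissing
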